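/- Let Ω be the simple Toeplitz subshift defined by coding sequences (a_k) and (n_k), with eventual alphabet Ã = {a^(1),…,a^(r)} of cardinality at least 2 and leading words ω^(1),…,ω^(r). Then for every j ∈ {1,…,r} there is a sequence (w_i) of finite words with |w_i| → ∞ such that for every i: ω^(j)(−2|w_i|)⋯ω^(j)(−1) = w_i w_i and ω^(j)(0)⋯ω^(j)(|w_i|−1) = w_i, i.e., ω^(j) = ⋯ w_i w_i | w_i ⋯ around the origin. -/

import Mathlib

open Filter Topology MeasureTheory

noncomputable section

abbrev SL2 := Matrix.SpecialLinearGroup (Fin 2) ℝ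

/-- Operator norm of a 2×2 real matrix acting on Euclidean ℝ². -/
def matNorm (M : Matrix (Fin 2) (Fin 2) ℝ) : ℝ :=
  ‖LinearMap.toContinuousLinearMap (Matrix.toEuclideanLin M)‖

/-- Norm of an element of SL(2,ℝ). -/
def slNorm (M : SL2) : ℝ := matNorm (M : Matrix (Fin 2) (Fin 2) ℝ)

/-- Action of an SL(2,ℝ) matrix on a euclidean vector. -/
def slAct (M : SL2) (v : EuclideanSpace ℝ (Fin 2)) : EuclideanSpace ℝ (Fin 2) :=
  Matrix.toEuclideanLin (M : Matrix (Fin 2) (Fin 2) ℝ) v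

variable {𝒜 : Type*}

/-- The shift by `k` on two-sided sequences; `shift 1` is the left shift `T`. -/
def shift (k : ℤ) (ω : ℤ → 𝒜) : ℤ → 𝒜 := fun n => ω (n + k)

/-- `Ω ⊆ 𝒜^ℤ` is a subshift: nonempty, closed, invariant under the shift and its inverse. -/
structure IsSubshift [TopologicalSpace 𝒜] (Ω : Set (ℤ → 𝒜)) : Prop where
  nonempty : Ω.Nonempty
  closed : IsClosed Ω
  shift_mem : ∀ ω ∈ Ω, shift 1 ω ∈ Ω
  shift_neg_mem : ∀ ω ∈ Ω, shift (-1) ω ∈ Ω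

/-- The word `ω(k) ω(k+1) ⋯ ω(k+n-1)`. -/
def word (ω : ℤ → 𝒜) (k : ℤ) (n : ℕ) : List 𝒜 := (List.range n).map fun i => ω (k + i)

/-- `v` occurs in `ω` at position `k`. -/
def occursAt (v : List 𝒜) (ω : ℤ → 𝒜) (k : ℤ) : Prop := v = word ω k v.length

/-- The words of length `n` occurring in elements of `Ω`. -/
def WordsN (Ω : Set (ℤ → 𝒜)) (n : ℕ) : Set (List 𝒜) :=
  {v | ∃ ω ∈ Ω, ∃ k : ℤ, v = word ω k n}

/-- The (nonempty) finite words occurring in elements of `Ω`. -/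
def Words (Ω : Set (ℤ → 𝒜)) : Set (List 𝒜) :=
  {v | 1 ≤ v.length ∧ v ∈ WordsN Ω v.length}

/-- `A` is locally constant on `Ω`: its value depends only on a finite window around 0. -/
def LocConstOn (Ω : Set (ℤ → 𝒜)) {β : Type*} (A : (ℤ → 𝒜) → β) : Prop :=
  ∃ N : ℕ, ∀ ω ∈ Ω, ∀ ρ ∈ Ω, (∀ i : ℤ, |i| ≤ (N : ℤ) → ω i = ρ i) → A ω = A ρ

/-- The positive part of the cocycle: `cocycleP A n ω = A(T^{n-1}ω) ⋯ A(ω)`. -/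
def cocycleP (A : (ℤ → 𝒜) → SL2) : ℕ → (ℤ → 𝒜) → SL2
  | 0, _ => 1
  | n + 1, ω => A (shift n ω) * cocycleP A n ω

/-- The full cocycle over the shift, `n ∈ ℤ`. -/
def cocycle (A : (ℤ → 𝒜) → SL2) (n : ℤ) (ω : ℤ → 𝒜) : SL2 :=
  if 0 ≤ n then cocycleP A n.toNat ω else (cocycleP A (-n).toNat (shift n ω))⁻¹

/-- `A` is uniform on `Ω`: `(1/n) log‖A(n,ω)‖` converges uniformly on `Ω`. -/
def IsUniform (Ω : Set (ℤ → 𝒜)) (A : (ℤ → 𝒜) → SL2) : Prop :=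
  ∃ Λ : ℝ, TendstoUniformlyOn
    (fun (n : ℕ) (ω : ℤ → 𝒜) => Real.log (slNorm (cocycle A n ω)) / n)
    (fun _ => Λ) atTop Ω

/-- The number of occurrences of `v` in `ω(1)⋯ω(n)`. -/
def occCount (v : List 𝒜) (ω : ℤ → 𝒜) (n : ℕ) : ℕ :=
  Set.ncard {k : ℤ | 1 ≤ k ∧ k + v.length ≤ (n : ℤ) + 1 ∧ occursAt v ω k}

/-- Uniform existence of word frequencies (unique ergodicity). -/
def UniformWordFreq (Ω : Set (ℤ → 𝒜)) : Prop :=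
  ∀ v ∈ Words Ω, ∃ ν : ℝ, TendstoUniformlyOn
    (fun (n : ℕ) (ω : ℤ → 𝒜) => (occCount v ω n : ℝ) / n) (fun _ => ν) atTop Ω

/-- Minimality: every orbit is dense in `Ω`. -/
def IsMinimalSubshift [TopologicalSpace 𝒜] (Ω : Set (ℤ → 𝒜)) : Prop :=
  ∀ ω ∈ Ω, ∀ ρ ∈ Ω, ρ ∈ closure {σ : ℤ → 𝒜 | ∃ k : ℤ, σ = shift k ω}

/-- Condition (α): for all large `n`, the words of length `n` of `Ω` are exactly the
words `lead j (-k+1) ⋯ lead j (-k+n)`, `0 ≤ k ≤ n`, of the leading words. -/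
def CondAlpha (Ω : Set (ℤ → 𝒜)) {r : ℕ} (lead : Fin r → (ℤ → 𝒜)) : Prop :=
  (∀ j, lead j ∈ Ω) ∧ ∃ N : ℕ, ∀ n : ℕ, N ≤ n →
    WordsN Ω n = {v | ∃ j : Fin r, ∃ k : ℕ, k ≤ n ∧ v = word (lead j) (1 - (k : ℤ)) n}

/-- Condition (β): for every locally constant cocycle the Lyapunov limits along the
leading words exist in both time directions and all have the same value. -/
def CondBeta (Ω : Set (ℤ → 𝒜)) {r : ℕ} (lead : Fin r → (ℤ → 𝒜)) : Prop :=
  ∀ A : (ℤ → 𝒜) → SL2, LocConstOn Ω A → ∃ Λ : ℝ, ∀ j : Fin r,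
    Tendsto (fun n : ℕ => Real.log (slNorm (cocycle A n (lead j))) / n) atTop (𝓝 Λ) ∧
    Tendsto (fun n : ℕ => Real.log (slNorm (cocycle A (-(n : ℤ)) (lead j))) / n) atTop (𝓝 Λ)

/-- Condition (γ): along the leading words, for every locally constant cocycle and every
nonzero vector, at most one of the two one-sided exponents is negative. -/
def CondGamma (Ω : Set (ℤ → 𝒜)) {r : ℕ} (lead : Fin r → (ℤ → 𝒜)) : Prop :=
  ∀ A : (ℤ → 𝒜) → SL2, LocConstOn Ω A → ∀ j : Fin r,
    ∀ v : EuclideanSpace ℝ (Fin 2), v ≠ 0 →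
    ¬ (limsup (fun n : ℕ => Real.log ‖slAct (cocycle A n (lead j)) v‖ / n) atTop < 0 ∧
       limsup (fun n : ℕ => Real.log ‖slAct (cocycle A (-(n : ℤ)) (lead j)) v‖ / n) atTop < 0)

/-- The leading sequence condition (LSC). -/
def SatisfiesLSC (Ω : Set (ℤ → 𝒜)) : Prop :=
  ∃ (r : ℕ) (lead : Fin r → (ℤ → 𝒜)), CondAlpha Ω lead ∧ CondBeta Ω lead ∧ CondGamma Ω lead

/-- `F` is subadditive on the words of `Ω`. -/
def SubadditiveOn (Ω : Set (ℤ → 𝒜)) (F : List 𝒜 → ℝ) : Prop :=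
  ∀ x y : List 𝒜, x ∈ Words Ω → y ∈ Words Ω → (x ++ y) ∈ Words Ω → F (x ++ y) ≤ F x + F y

/-- `Fb` is the asymptotic mean `lim_n max { F x / n : x ∈ W(Ω)_n }` of `F`. -/
def IsAsympMean (Ω : Set (ℤ → 𝒜)) (F : List 𝒜 → ℝ) (Fb : ℝ) : Prop :=
  Tendsto (fun n : ℕ => sSup ((fun x => F x / n) '' WordsN Ω n)) atTop (𝓝 Fb)

/-- Maximal number of pairwise disjoint occurrences of `v` in `ω(1)⋯ω(n)`. -/
def disjCount (v : List 𝒜) (ω : ℤ → 𝒜) (n : ℕ) : ℕ :=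
  sSup {m : ℕ | ∃ S : Finset ℤ, S.card = m ∧
    (∀ k ∈ S, 1 ≤ k ∧ k + v.length ≤ (n : ℤ) + 1 ∧ occursAt v ω k) ∧
    (∀ k ∈ S, ∀ l ∈ S, k ≠ l → (v.length : ℤ) ≤ |k - l|)}

/-- Condition (PQ) for the one-sided word `p(1)p(2)⋯`. -/
def CondPQ (p : ℤ → 𝒜) : Prop :=
  ∃ c : ℝ, 0 < c ∧ ∀ m : ℕ, 1 ≤ m →
    c ≤ liminf (fun n : ℕ => (m : ℝ) / n * disjCount (word p 1 m) p n) atTop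

/-- ℓ²(ℤ) over the reals. -/
abbrev Ell2Z : Type := lp (fun _ : ℤ => ℝ) 2

/-- `H` acts as the Jacobi operator with coefficients `f, g` at `ω`. -/
def IsJacobiAt (f g : (ℤ → 𝒜) → ℝ) (ω : ℤ → 𝒜) (H : Ell2Z →L[ℝ] Ell2Z) : Prop :=
  ∀ u : Ell2Z, ∀ n : ℤ,
    (H u : ∀ _ : ℤ, ℝ) n =
      f (shift n ω) * (u : ∀ _ : ℤ, ℝ) (n - 1) + f (shift (n + 1) ω) * (u : ∀ _ : ℤ, ℝ) (n + 1)
        + g (shift n ω) * (u : ∀ _ : ℤ, ℝ) n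

/-- The pair `(f,g)` is periodic on `Ω`. -/
def PeriodicPair (Ω : Set (ℤ → 𝒜)) (f g : (ℤ → 𝒜) → ℝ) : Prop :=
  ∃ P : ℕ, 1 ≤ P ∧ ∀ ω ∈ Ω, f (shift (P : ℤ) ω) = f ω ∧ g (shift (P : ℤ) ω) = g ω

/-- `S ⊆ ℝ` is a Cantor set of Lebesgue measure zero: compact, empty interior,
no isolated points, Lebesgue measure zero. -/
def IsMeasureZeroCantor (S : Set ℝ) : Prop :=
  IsCompact S ∧ interior S = ∅ ∧ Perfect S ∧ volume S = 0

/-- `n` copies of `x` separated by `n-1` copies of the letter `l`. -/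
def sepJoin (x : List 𝒜) (l : 𝒜) (m : ℕ) : List 𝒜 :=
  (List.replicate (m - 1) (x ++ [l])).flatten ++ x

/-- `Blk a nseq (k+1)` is the block `block(k)` of the simple Toeplitz construction
(with `Blk a nseq 0 = block(-1) = ε`). -/
def Blk (a : ℕ → 𝒜) (nseq : ℕ → ℕ) : ℕ → List 𝒜
  | 0 => []
  | k + 1 => sepJoin (Blk a nseq k) (a k) (nseq k)

/-- `p(1)p(2)⋯` is the one-sided word `block(∞)`: every block is a prefix of it. -/
def IsBlockInf (a : ℕ → 𝒜) (nseq : ℕ → ℕ) (p : ℤ → 𝒜) : Prop :=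
  ∀ k : ℕ, word p 1 (Blk a nseq k).length = Blk a nseq k

/-- The simple Toeplitz subshift generated by `block(∞) = p(1)p(2)⋯`: all two-sided
sequences whose finite subwords all occur in `block(∞)`. -/
def toeplitzΩ (p : ℤ → 𝒜) : Set (ℤ → 𝒜) :=
  {ω | ∀ (i : ℤ) (n : ℕ), ∃ l : ℤ, 1 ≤ l ∧ word ω i n = word p l n}

/-- The eventual alphabet: letters occurring infinitely often in `(a_k)`. -/
def EvAlph (a : ℕ → 𝒜) : Set 𝒜 := {x | ∀ K : ℕ, ∃ k, K ≤ k ∧ a k = x}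

/-- The leading word `p^R v | p`: equals `p(n+1)` for `n ≥ 0`, carries the word `v` on
positions `-|v|, …, -1`, and equals `p(-(n+|v|))` for `n < -|v|`. -/
def leadWordGen (p : ℤ → 𝒜) (v : List 𝒜) : ℤ → 𝒜 := fun n =>
  if 0 ≤ n then p (n + 1)
  else if -(v.length : ℤ) ≤ n then v.getD (n + v.length).toNat (p 1)
  else p (-(n + v.length))

/-- The Gauss map. -/
def gaussMap (x : ℝ) : ℝ := 1 / x - ⌊1 / x⌋

/-- `cfSeq α n` is the continued fraction coefficient `a_{n+1}` of `α`. -/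
def cfSeq (α : ℝ) (n : ℕ) : ℕ := ⌊1 / (gaussMap^[n] α)⌋₊

/-- The standard Sturmian words: `sturmW α (n+1) = s_n`, `sturmW α 0 = s_{-1} = 1`,
`sturmW α 1 = s_0 = 0`, `s_1 = s_0^{a_1 - 1} s_{-1}`, `s_n = s_{n-1}^{a_n} s_{n-2}`. -/
def sturmW (α : ℝ) : ℕ → List (Fin 2)
  | 0 => [1]
  | 1 => [0]
  | 2 => List.replicate (cfSeq α 0 - 1) (0 : Fin 2) ++ [1]
  | n + 3 => (List.replicate (cfSeq α (n + 1)) (sturmW α (n + 2))).flatten ++ sturmW α (n + 1)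

/-- The Sturmian subshift with rotation number `α`: all two-sided sequences whose finite
subwords occur in some `s_n`. -/
def sturmΩ (α : ℝ) : Set (ℤ → Fin 2) :=
  {ω | ∀ (i : ℤ) (n : ℕ), ∃ m : ℕ, word ω i n <:+: sturmW α m}

/-- The positive cocycle of a map `A` over a transformation `T`:
`cocycleH T A n ω = A(T^{n-1}ω) ⋯ A(ω)`. -/
def cocycleH {Ω : Type*} (T : Ω → Ω) (A : Ω → SL2) : ℕ → Ω → SL2
  | 0, _ => 1
  | n + 1, ω => A (T^[n] ω) * cocycleH T A n ω

end

/-!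
Fix `k` with `a k = c` and let `B` be the block preceding the letter `c` in the next stage of the
construction. As `n_k ≥ 2`, the one-sided word `p` starts with `B c B`. Blocks are palindromes, so
the mirror image of `p`, which precedes the letter `c` at position `-1` of the leading word, ends
with `B c B` too. Hence the leading word reads `B c B c | B c` around the origin and `w = B c`
works. The letter `c` recurs at arbitrarily late stages, which makes `|w|` unbounded.
-/

section Word

variable {α : Type*}

-- The cast of the index in `word` elaborates to a monadic lift of the list `List.range n`.
theorem word_eq_map_range (ω : ℤ → α) (k : ℤ) (n : ℕ) :
    word ω k n = (List.range n).map fun i : ℕ => ω (k + i) := by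
  simp [word, ← List.map_eq_flatMap]

@[simp]
theorem length_word (ω : ℤ → α) (k : ℤ) (n : ℕ) : (word ω k n).length = n := by
  simp [word_eq_map_range]

@[simp]
theorem getElem_word (ω : ℤ → α) (k : ℤ) (n i : ℕ) (hi : i < (word ω k n).length) :
    (word ω k n)[i] = ω (k + i) := by
  simp [word_eq_map_range]

theorem word_add (ω : ℤ → α) (k : ℤ) (m n : ℕ) :
    word ω k (m + n) = word ω k m ++ word ω (k + m) n := by
  simp [word_eq_map_range, List.range_add, Function.comp_def, add_assoc]

theorem occursAt_of_prefix {u v : List α} {ω : ℤ → α} {k : ℤ} (huv : u <+: v)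
    (hv : occursAt v ω k) : occursAt u ω k := by
  obtain ⟨t, rfl⟩ := huv
  rw [occursAt, List.length_append, word_add] at hv
  exact List.append_inj_left hv (by simp)

end Word

section LeadWordGen

variable {α : Type*} (p : ℤ → α) (v : List α)

theorem word_leadWordGen_zero (m : ℕ) : word (leadWordGen p v) 0 m = word p 1 m := by
  refine List.ext_getElem (by simp) fun i _ _ => ?_
  simp [leadWordGen, add_comm]

theorem word_leadWordGen_center : word (leadWordGen p v) (-v.length) v.length = v := by
  refine List.ext_getElem (by simp) fun i _ hi => ?_
  have hneg : ¬ (0 : ℤ) ≤ -v.length + i := by omega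
  simp [leadWordGen, hneg, hi]

theorem word_leadWordGen_left (m : ℕ) :
    word (leadWordGen p v) (-(m + v.length)) m = (word p 1 m).reverse := by
  refine List.ext_getElem (by simp) fun i hi _ => ?_
  rw [length_word] at hi
  have hneg : ¬ (0 : ℤ) ≤ -(m + v.length) + i := by omega
  have hleft : ¬ -(v.length : ℤ) ≤ -(m + v.length) + i := by omega
  simp only [getElem_word, List.getElem_reverse, length_word, leadWordGen, if_neg hneg,
    if_neg hleft]
  congr 1
  omega

theorem word_leadWordGen_neg (m : ℕ) :
    word (leadWordGen p v) (-(m + v.length)) (m + v.length) = (word p 1 m).reverse ++ v := by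
  rw [word_add, word_leadWordGen_left, neg_add_rev, neg_add_cancel_right, word_leadWordGen_center]

end LeadWordGen

section Block

variable {α : Type*}

theorem reverse_sepJoin (x : List α) (c : α) (m : ℕ) :
    (sepJoin x c m).reverse = sepJoin x.reverse c m := by
  simpa [sepJoin, List.reverse_flatten] using
    List.append_flatten_map_append (List.replicate (m - 1) [c]) x.reverse

theorem append_append_prefix_sepJoin (x : List α) (c : α) {m : ℕ} (hm : 2 ≤ m) :
    x ++ [c] ++ x <+: sepJoin x c m := by
  obtain ⟨n, rfl⟩ := Nat.exists_eq_add_of_le' hm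
  refine ⟨(List.replicate n ([c] ++ x)).flatten, ?_⟩
  have hrebracket := List.append_flatten_map_append (List.replicate n [c]) x
  simpa [sepJoin, List.replicate_succ] using hrebracket

theorem reverse_Blk (a : ℕ → α) (nseq : ℕ → ℕ) (k : ℕ) :
    (Blk a nseq k).reverse = Blk a nseq k := by
  induction k with
  | zero => rfl
  | succ k ih => rw [Blk, reverse_sepJoin, ih]

theorem Blk_append_append_prefix_Blk_succ (a : ℕ → α) {nseq : ℕ → ℕ} {k : ℕ} (hk : 2 ≤ nseq k) :
    Blk a nseq k ++ [a k] ++ Blk a nseq k <+: Blk a nseq (k + 1) :=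
  append_append_prefix_sepJoin _ _ hk

theorem le_length_Blk (a : ℕ → α) {nseq : ℕ → ℕ} (hn : ∀ k, 2 ≤ nseq k) (k : ℕ) :
    k ≤ (Blk a nseq k).length := by
  induction k with
  | zero => exact Nat.zero_le _
  | succ k ih =>
    have hle := (Blk_append_append_prefix_Blk_succ a (hn k)).length_le
    rw [List.length_append, List.length_append, List.length_singleton] at hle
    omega

theorem IsBlockInf.occursAt_Blk_append_append {a : ℕ → α} {nseq : ℕ → ℕ} {p : ℤ → α}
    (hp : IsBlockInf a nseq p) {k : ℕ} (hk : 2 ≤ nseq k) :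
    occursAt (Blk a nseq k ++ [a k] ++ Blk a nseq k) p 1 :=
  occursAt_of_prefix (Blk_append_append_prefix_Blk_succ a hk) (hp (k + 1)).symm

end Block

section ThreeBlocks

variable {α : Type*} {p : ℤ → α} {x v : List α}

theorem word_leadWordGen_zero_of_occursAt {u : List α} (hu : occursAt u p 1) :
    word (leadWordGen p v) 0 u.length = u := by
  rw [word_leadWordGen_zero, ← hu]

theorem word_leadWordGen_neg_of_occursAt (hx : x.reverse = x) (hv : v.reverse = v)
    (hp : occursAt (x ++ v ++ x) p 1) :
    word (leadWordGen p v) (-(2 * ((x ++ v).length : ℤ))) (2 * (x ++ v).length)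
      = (x ++ v) ++ (x ++ v) := by
  have hlen : 2 * (x ++ v).length = (x ++ v ++ x).length + v.length := by
    simp only [List.length_append]
    omega
  have hstart : 2 * ((x ++ v).length : ℤ) = (x ++ v ++ x).length + v.length := mod_cast hlen
  calc
    word (leadWordGen p v) (-(2 * ((x ++ v).length : ℤ))) (2 * (x ++ v).length)
    _ = (word p 1 (x ++ v ++ x).length).reverse ++ v := by
      rw [hstart, hlen, word_leadWordGen_neg]
    _ = (x ++ v ++ x).reverse ++ v := by rw [← hp]
    _ = (x ++ v) ++ (x ++ v) := by simp [hx, hv]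

end ThreeBlocks

theorem statement13_general {α : Type*} {a : ℕ → α} {nseq : ℕ → ℕ} (hn : ∀ k, 2 ≤ nseq k)
    {p : ℤ → α} (hp : IsBlockInf a nseq p) {c : α} (hc : c ∈ EvAlph a) :
    ∃ w : ℕ → List α,
      Tendsto (fun i => (w i).length) atTop atTop ∧
      ∀ i : ℕ,
        word (leadWordGen p [c]) (-(2 * ((w i).length : ℤ))) (2 * (w i).length) = w i ++ w i ∧
        word (leadWordGen p [c]) 0 (w i).length = w i := by
  choose K hiK hK using hc
  refine ⟨fun i => Blk a nseq (K i) ++ [c], ?_, fun i => ?_⟩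
  · refine tendsto_atTop_mono (fun i => ?_) tendsto_id
    calc
      i ≤ K i := hiK i
      _ ≤ (Blk a nseq (K i)).length := le_length_Blk a hn (K i)
      _ ≤ (Blk a nseq (K i) ++ [c]).length := by simp
  · have hthree := hp.occursAt_Blk_append_append (hn (K i))
    rw [hK i] at hthree
    exact ⟨word_leadWordGen_neg_of_occursAt (reverse_Blk a nseq (K i)) rfl hthree,
      word_leadWordGen_zero_of_occursAt (occursAt_of_prefix (List.prefix_append _ _) hthree)⟩

/-- **Occurrences of three blocks.** Every leading word `ω^(j)` of a
simple Toeplitz subshift with eventual alphabet of cardinality ≥ 2 looks like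
`⋯ w_i w_i | w_i ⋯` around the origin for words `w_i` of unbounded length. -/
theorem statement13 {𝒜 : Type*} [Fintype 𝒜]
    (a : ℕ → 𝒜) (nseq : ℕ → ℕ) (ha : ∀ k, a (k + 1) ≠ a k) (hn : ∀ k, 2 ≤ nseq k)
    (p : ℤ → 𝒜) (hp : IsBlockInf a nseq p)
    {r : ℕ} (aj : Fin r → 𝒜) (haj : ∀ x : 𝒜, x ∈ EvAlph a ↔ ∃ j, aj j = x)
    (hcard : ∃ x y : 𝒜, x ∈ EvAlph a ∧ y ∈ EvAlph a ∧ x ≠ y) :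
    ∀ j : Fin r, ∃ w : ℕ → List 𝒜,
      Filter.Tendsto (fun i => (w i).length) Filter.atTop Filter.atTop ∧
      ∀ i : ℕ,
        word (leadWordGen p [aj j]) (-(2 * ((w i).length : ℤ))) (2 * (w i).length)
          = w i ++ w i ∧
        word (leadWordGen p [aj j]) 0 (w i).length = w i := by
  intro j
  exact statement13_general hn hp ((haj (aj j)).2 ⟨j, rfl⟩)
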